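/- Modified Laplace transform of the Caputo–Hadamard derivative: for 0 < α < 1 and f sufficiently smooth with suitable decay, L{_{CH}D_a^α f}(z) = z^α L{f}(z) − z^{α−1} f(a). -/

import Mathlib

open MeasureTheory

/-!
The substitution `t = a * exp x` turns the modified Laplace transform of `f` into the ordinary
Laplace transform of `g x = f (a * exp x)`, and the Caputo–Hadamard derivative of order `α` into
the convolution of `g'` with the Riemann–Liouville kernel `k x = x ^ (-α) / Γ(1 - α)`, whose
transform is `z ^ (α - 1)`: for real `z` this is Euler's integral for `Γ`, and both sides are
analytic in the half-plane `0 < re z`.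

Since `g'` itself need not have a Laplace transform, the convolution theorem does not apply to
`k * g'`. It does apply to both sides of `1 * (k * g') = k * (1 * g') = k * (g - g 0)`, which is
Fubini on a triangle, and gives `z⁻¹ • L{k * g'} = L{k} • (L{g} - z⁻¹ • g 0)`.
-/

open Set Filter Topology

section LaplaceTransform

variable {E : Type*} [NormedAddCommGroup E] [NormedSpace ℂ E]

/-- The one-sided Laplace transform `∫₀^∞ e^{-zx} f(x) dx`. -/
noncomputable def laplaceTransform (f : ℝ → E) (z : ℂ) : E :=
  ∫ x : ℝ in Ioi 0, Complex.exp (-z * x) • f x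

/-- Absolute convergence of the integral defining `laplaceTransform f z`. -/
def LaplaceConvergent (f : ℝ → E) (z : ℂ) : Prop :=
  IntegrableOn (fun x : ℝ => Complex.exp (-z * x) • f x) (Ioi 0)

theorem laplaceTransform_congr {f g : ℝ → E} (h : EqOn f g (Ioi 0)) (z : ℂ) :
    laplaceTransform f z = laplaceTransform g z :=
  setIntegral_congr_fun measurableSet_Ioi fun x hx => by simp only [h hx]

theorem LaplaceConvergent.sub {f g : ℝ → E} {z : ℂ} (hf : LaplaceConvergent f z)
    (hg : LaplaceConvergent g z) : LaplaceConvergent (fun x => f x - g x) z := by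
  simpa only [LaplaceConvergent, smul_sub] using! Integrable.sub hf hg

theorem laplaceTransform_sub {f g : ℝ → E} {z : ℂ} (hf : LaplaceConvergent f z)
    (hg : LaplaceConvergent g z) :
    laplaceTransform (fun x => f x - g x) z = laplaceTransform f z - laplaceTransform g z := by
  simpa only [laplaceTransform, smul_sub] using integral_sub hf hg

theorem laplaceConvergent_const (c : E) {z : ℂ} (hz : 0 < z.re) :
    LaplaceConvergent (fun _ => c) z :=
  (integrableOn_exp_mul_complex_Ioi (by simpa using hz) 0).smul_const c

theorem laplaceTransform_const [CompleteSpace E] (c : E) {z : ℂ} (hz : 0 < z.re) :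
    laplaceTransform (fun _ => c) z = z⁻¹ • c := by
  rw [laplaceTransform, integral_smul_const, integral_exp_mul_complex_Ioi (by simpa using hz)]
  simp

theorem norm_exp_neg_mul_smul (z : ℂ) (x : ℝ) (v : E) :
    ‖Complex.exp (-z * x) • v‖ = Real.exp (-(z.re * x)) * ‖v‖ := by
  simp [norm_smul, Complex.norm_exp]

theorem LaplaceConvergent.aestronglyMeasurable {f : ℝ → E} {z : ℂ} (hf : LaplaceConvergent f z) :
    AEStronglyMeasurable f (volume.restrict (Ioi 0)) := by
  have hexp : Continuous fun x : ℝ => Complex.exp (z * x) := by fun_prop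
  refine (hexp.aestronglyMeasurable.smul (Integrable.aestronglyMeasurable hf)).congr
    (ae_of_all _ fun x => ?_)
  simp [smul_smul, ← Complex.exp_add]

theorem LaplaceConvergent.intervalIntegrable {f : ℝ → E} {z : ℂ} (hf : LaplaceConvergent f z)
    {x : ℝ} (hx : 0 ≤ x) : IntervalIntegrable f volume 0 x := by
  have hexp : Continuous fun x : ℝ => Complex.exp (z * x) := by fun_prop
  have hint : IntervalIntegrable (fun x : ℝ => Complex.exp (-z * x) • f x) volume 0 x :=
    (intervalIntegrable_iff_integrableOn_Ioc_of_le hx).mpr (hf.mono_set Ioc_subset_Ioi_self)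
  refine (hint.continuousOn_smul hexp.continuousOn).congr fun y _ => ?_
  simp [smul_smul, ← Complex.exp_add]

theorem LaplaceConvergent.mono_re {f : ℝ → E} {w z : ℂ} (hf : LaplaceConvergent f w)
    (hwz : w.re ≤ z.re) : LaplaceConvergent f z := by
  have hexp : Continuous fun x : ℝ => Complex.exp (-z * x) := by fun_prop
  refine Integrable.mono hf (hexp.aestronglyMeasurable.smul hf.aestronglyMeasurable) ?_
  filter_upwards [self_mem_ae_restrict measurableSet_Ioi] with x (hx : 0 < x)
  rw [norm_exp_neg_mul_smul, norm_exp_neg_mul_smul]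
  gcongr

theorem mul_exp_neg_mul_le_inv {δ : ℝ} (hδ : 0 < δ) (x : ℝ) : x * Real.exp (-(δ * x)) ≤ δ⁻¹ := by
  rw [Real.exp_neg, ← div_eq_mul_inv, div_le_iff₀ (Real.exp_pos _), ← div_eq_inv_mul,
    le_div_iff₀' hδ]
  linarith [Real.add_one_le_exp (δ * x)]

theorem differentiableAt_laplaceTransform {f : ℝ → E} {w z : ℂ} (hf : LaplaceConvergent f w)
    (hwz : w.re < z.re) : DifferentiableAt ℂ (laplaceTransform f) z := by
  obtain ⟨δ, hδ, hwδz⟩ : ∃ δ > 0, w.re + δ < z.re :=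
    ⟨(z.re - w.re) / 2, by linarith, by linarith⟩
  have hnhds : {u : ℂ | w.re + δ < u.re} ∈ 𝓝 z :=
    (isOpen_lt continuous_const Complex.continuous_re).mem_nhds hwδz
  have hfm := hf.aestronglyMeasurable
  refine (hasDerivAt_integral_of_dominated_loc_of_deriv_le (μ := volume.restrict (Ioi 0))
    (F := fun (u : ℂ) (x : ℝ) => Complex.exp (-u * x) • f x)
    (F' := fun (u : ℂ) (x : ℝ) => (Complex.exp (-u * x) * -x) • f x)
    (bound := fun x : ℝ => δ⁻¹ * ‖Complex.exp (-w * x) • f x‖) hnhds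
    (.of_forall fun u => ?_) (hf.mono_re hwz.le) ?_ ?_ (hf.norm.const_mul _) ?_).2.differentiableAt
  · exact (by fun_prop : Continuous fun x : ℝ => Complex.exp (-u * x)).aestronglyMeasurable.smul hfm
  · exact (by fun_prop : Continuous fun x : ℝ =>
      Complex.exp (-z * x) * -x).aestronglyMeasurable.smul hfm
  · filter_upwards [self_mem_ae_restrict measurableSet_Ioi] with x (hx : 0 < x) u hu
    have hexp : Real.exp (-(u.re * x)) ≤ Real.exp (-(δ * x)) * Real.exp (-(w.re * x)) := by
      rw [← Real.exp_add, Real.exp_le_exp]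
      linarith [mul_le_mul_of_nonneg_right (le_of_lt hu) hx.le]
    calc ‖(Complex.exp (-u * x) * -x) • f x‖
        = x * (Real.exp (-(u.re * x)) * ‖f x‖) := by
          rw [mul_comm, mul_smul, norm_smul, norm_exp_neg_mul_smul, norm_neg, Complex.norm_real,
            Real.norm_of_nonneg hx.le]
      _ ≤ x * (Real.exp (-(δ * x)) * Real.exp (-(w.re * x)) * ‖f x‖) := by gcongr
      _ = x * Real.exp (-(δ * x)) * (Real.exp (-(w.re * x)) * ‖f x‖) := by ring
      _ ≤ δ⁻¹ * ‖Complex.exp (-w * x) • f x‖ := by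
          rw [norm_exp_neg_mul_smul]
          gcongr
          exact mul_exp_neg_mul_le_inv hδ x
  · refine ae_of_all _ fun x u _ => HasDerivAt.smul_const ?_ _
    simpa using ((hasDerivAt_id u).neg.mul_const (x : ℂ)).cexp

theorem laplaceTransform_convolution [CompleteSpace E] {k : ℝ → ℂ} {f : ℝ → E} {z : ℂ}
    (hk : LaplaceConvergent k z) (hf : LaplaceConvergent f z) :
    laplaceTransform (fun x => ∫ t in 0..x, k t • f (x - t)) z =
      laplaceTransform k z • laplaceTransform f z := by
  refine Eq.trans ?_ (integral_posConvolution hk hf (ContinuousLinearMap.lsmul ℝ ℂ))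
  refine integral_congr_ae (ae_of_all _ fun x => ?_)
  have hexp (t : ℝ) : Complex.exp (-z * x) =
      Complex.exp (-z * t) * Complex.exp (-z * (x - t : ℝ)) := by
    rw [← Complex.exp_add]
    push_cast
    ring_nf
  simp only [← intervalIntegral.integral_smul, ContinuousLinearMap.lsmul_apply]
  refine intervalIntegral.integral_congr fun t _ => ?_
  simp only [hexp t, smul_smul, smul_eq_mul]
  ring_nf

end LaplaceTransform

section Kernel

/-- The Riemann–Liouville kernel `x^{β-1} / Γ(β)` on `x > 0`, convolution with which is
fractional integration of order `β`. -/
noncomputable def riemannLiouvilleKernel (β x : ℝ) : ℂ :=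
  (x ^ (β - 1) / Real.Gamma β : ℝ)

variable {β : ℝ}

theorem laplaceConvergent_riemannLiouvilleKernel (hβ : 0 < β) {z : ℂ} (hz : 0 < z.re) :
    LaplaceConvergent (riemannLiouvilleKernel β) z := by
  have hint : IntegrableOn (fun x : ℝ => x ^ (β - 1) * Real.exp (-z.re * x) / Real.Gamma β)
      (Ioi 0) := by
    simpa using! (integrableOn_rpow_mul_exp_neg_mul_rpow (by linarith) one_pos hz).div_const
      (Real.Gamma β)
  refine Integrable.mono' hint (Measurable.aestronglyMeasurable ?_) ?_
  · unfold riemannLiouvilleKernel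
    fun_prop
  · filter_upwards [self_mem_ae_restrict measurableSet_Ioi] with x (hx : 0 < x)
    rw [norm_exp_neg_mul_smul, riemannLiouvilleKernel, Complex.norm_real,
      Real.norm_of_nonneg (by positivity)]
    exact le_of_eq (by ring_nf)

theorem laplaceTransform_riemannLiouvilleKernel_ofReal (hβ : 0 < β) {r : ℝ} (hr : 0 < r) :
    laplaceTransform (riemannLiouvilleKernel β) r = (r : ℂ) ^ (-β : ℂ) := by
  have hΓ := (Real.Gamma_pos_of_pos hβ).ne'
  calc laplaceTransform (riemannLiouvilleKernel β) r
      = ((∫ x in Ioi 0, x ^ (β - 1) * Real.exp (-(r * x)) / Real.Gamma β : ℝ) : ℂ) := by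
        rw [← integral_complex_ofReal]
        refine integral_congr_ae (ae_of_all _ fun x => ?_)
        simp only [riemannLiouvilleKernel, smul_eq_mul]
        push_cast
        ring_nf
    _ = ((r ^ (-β) : ℝ) : ℂ) := by
        rw [integral_div, Real.integral_rpow_mul_exp_neg_mul_Ioi hβ hr, mul_div_cancel_right₀ _ hΓ,
          one_div, Real.inv_rpow hr.le, ← Real.rpow_neg hr.le]
    _ = (r : ℂ) ^ (-β : ℂ) := by rw [Complex.ofReal_cpow hr.le, Complex.ofReal_neg]

theorem laplaceTransform_riemannLiouvilleKernel (hβ : 0 < β) {z : ℂ} (hz : 0 < z.re) :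
    laplaceTransform (riemannLiouvilleKernel β) z = z ^ (-β : ℂ) := by
  have hopen : IsOpen {w : ℂ | 0 < w.re} := isOpen_lt continuous_const Complex.continuous_re
  have hlaplace : AnalyticOnNhd ℂ (laplaceTransform (riemannLiouvilleKernel β)) {w | 0 < w.re} := by
    refine DifferentiableOn.analyticOnNhd (fun w (hw : 0 < w.re) => ?_) hopen
    have hhalf : 0 < ((w.re / 2 : ℝ) : ℂ).re := by simpa using hw
    refine (differentiableAt_laplaceTransform
      (laplaceConvergent_riemannLiouvilleKernel hβ hhalf) ?_).differentiableWithinAt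
    simpa using hw
  have hcpow : AnalyticOnNhd ℂ (fun w : ℂ => w ^ (-β : ℂ)) {w | 0 < w.re} :=
    DifferentiableOn.analyticOnNhd (fun w hw =>
      (differentiableAt_id.cpow_const (.inl hw)).differentiableWithinAt) hopen
  have hreal : Tendsto ((↑) : ℝ → ℂ) (𝓝[≠] 1) (𝓝[≠] 1) := by
    refine tendsto_nhdsWithin_iff.mpr ⟨?_, ?_⟩
    · exact (Complex.continuous_ofReal.tendsto' 1 1 (by simp)).mono_left nhdsWithin_le_nhds
    · filter_upwards [self_mem_nhdsWithin] with r hr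
      simpa using hr
  refine hlaplace.eqOn_of_preconnected_of_frequently_eq hcpow
    (convex_halfSpace_re_gt 0).isPreconnected (z₀ := 1) (by simp)
    (hreal.frequently (Eventually.frequently ?_)) hz
  filter_upwards [nhdsWithin_le_nhds (lt_mem_nhds one_pos)] with r hr
  exact laplaceTransform_riemannLiouvilleKernel_ofReal hβ hr

end Kernel

section ConvolutionPrimitive

theorem measurableSet_triangle (a b : ℝ) :
    MeasurableSet {p : ℝ × ℝ | a < p.2 ∧ p.2 < p.1 ∧ p.1 ≤ b} :=
  (measurableSet_lt measurable_const measurable_snd).inter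
    ((measurableSet_lt measurable_snd measurable_fst).inter
      (measurableSet_le measurable_fst measurable_const))

theorem integral_integral_swap_triangle {E : Type*} [NormedAddCommGroup E] [NormedSpace ℝ E]
    {a b : ℝ} (hab : a ≤ b) {F : ℝ → ℝ → E}
    (hF : IntegrableOn (Function.uncurry F) {p | a < p.2 ∧ p.2 < p.1 ∧ p.1 ≤ b}) :
    ∫ u in a..b, ∫ v in a..u, F u v = ∫ v in a..b, ∫ u in v..b, F u v := by
  set T : Set (ℝ × ℝ) := {p | a < p.2 ∧ p.2 < p.1 ∧ p.1 ≤ b}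
  have hfst (u : ℝ) : ∫ v, T.indicator (Function.uncurry F) (u, v) =
      (Ioc a b).indicator (fun u => ∫ v in a..u, F u v) u := by
    by_cases hu : u ∈ Ioc a b
    · rw [indicator_of_mem hu, intervalIntegral.integral_of_le hu.1.le,
        integral_Ioc_eq_integral_Ioo, ← integral_indicator measurableSet_Ioo]
      congr with v
      simp [indicator, T, hu.2]
    · rw [indicator_of_notMem hu, ← integral_zero ℝ E]
      congr with v
      exact indicator_of_notMem (fun h => hu ⟨h.1.trans h.2.1, h.2.2⟩) _
  have hsnd (v : ℝ) : ∫ u, T.indicator (Function.uncurry F) (u, v) =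
      (Ioc a b).indicator (fun v => ∫ u in v..b, F u v) v := by
    by_cases hv : v ∈ Ioc a b
    · rw [indicator_of_mem hv, intervalIntegral.integral_of_le hv.2,
        ← integral_indicator measurableSet_Ioc]
      congr with u
      simp [indicator, T, hv.1]
    · rw [indicator_of_notMem hv, ← integral_zero ℝ E]
      congr with u
      exact indicator_of_notMem (fun h => hv ⟨h.1, h.2.1.le.trans h.2.2⟩) _
  rw [intervalIntegral.integral_of_le hab, intervalIntegral.integral_of_le hab,
    ← integral_indicator measurableSet_Ioc, ← integral_indicator measurableSet_Ioc]
  simp_rw [← hfst, ← hsnd]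
  exact integral_integral_swap (f := fun u v => T.indicator (Function.uncurry F) (u, v))
    (hF.integrable_indicator (measurableSet_triangle a b))

variable {E : Type*} [NormedAddCommGroup E] [NormedSpace ℂ E]

theorem integrableOn_triangle_convolution_integrand {k : ℝ → ℂ} {h : ℝ → E} {x : ℝ}
    (hk : IntegrableOn k (Ioc 0 x)) (hh : IntegrableOn h (Ioc 0 x)) :
    IntegrableOn (fun p : ℝ × ℝ => k p.2 • h (p.1 - p.2)) {p | 0 < p.2 ∧ p.2 < p.1 ∧ p.1 ≤ x} := by
  have hint := (hk.integrable_indicator measurableSet_Ioc).convolution_integrand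
    (ContinuousLinearMap.lsmul ℝ ℂ) (hh.integrable_indicator measurableSet_Ioc)
  refine (hint.integrableOn).congr_fun (fun p hp => ?_) ?_
  · obtain ⟨h0, hlt, hle⟩ := hp
    have hk_mem : p.2 ∈ Ioc 0 x := ⟨h0, by linarith⟩
    have hh_mem : p.1 - p.2 ∈ Ioc 0 x := ⟨by linarith, by linarith⟩
    simp only [indicator_of_mem hk_mem, indicator_of_mem hh_mem, ContinuousLinearMap.lsmul_apply]
  · exact measurableSet_triangle 0 x

theorem integral_convolution_eq_convolution_integral {k : ℝ → ℂ} {h : ℝ → E} {x : ℝ}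
    (hx : 0 ≤ x) (hk : IntervalIntegrable k volume 0 x)
    (hh : IntervalIntegrable h volume 0 x) :
    ∫ u in 0..x, ∫ t in 0..u, k t • h (u - t) =
      ∫ t in 0..x, k t • ∫ s in 0..(x - t), h s := by
  rw [intervalIntegrable_iff_integrableOn_Ioc_of_le hx] at hk hh
  rw [integral_integral_swap_triangle hx (F := fun u t => k t • h (u - t))
    (integrableOn_triangle_convolution_integrand hk hh)]
  refine intervalIntegral.integral_congr fun t _ => ?_
  simp only [intervalIntegral.integral_smul, intervalIntegral.integral_comp_sub_right, sub_self]

theorem laplaceTransform_convolution_deriv [CompleteSpace E] {k : ℝ → ℂ} {g g' : ℝ → E} {z : ℂ}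
    (hz : 0 < z.re)
    (hg' : ∀ x, 0 ≤ x → IntervalIntegrable g' volume 0 x)
    (hg : ∀ x, 0 ≤ x → ∫ t in 0..x, g' t = g x - g 0)
    (hLk : LaplaceConvergent k z) (hLg : LaplaceConvergent g z)
    (hLkg' : LaplaceConvergent (fun x => ∫ t in 0..x, k t • g' (x - t)) z) :
    laplaceTransform (fun x => ∫ t in 0..x, k t • g' (x - t)) z =
      laplaceTransform k z • (z • laplaceTransform g z - g 0) := by
  have hz0 : z ≠ 0 := fun h => by simp [h] at hz
  have hconv : EqOn (fun x => ∫ t in 0..x, (1 : ℂ) • ∫ s in 0..(x - t), k s • g' (x - t - s))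
      (fun x => ∫ t in 0..x, k t • (g (x - t) - g 0)) (Ioi 0) := by
    intro x (hx : 0 < x)
    have hprim := integral_convolution_eq_convolution_integral hx.le
      (hLk.intervalIntegrable hx.le) (hg' x hx.le)
    have hsub := intervalIntegral.integral_comp_sub_left (a := 0) (b := x)
      (fun u => ∫ s in 0..u, k s • g' (u - s)) x
    simp only [one_smul]
    rw [hsub, sub_self, sub_zero, hprim]
    refine intervalIntegral.integral_congr fun t ht => ?_
    rw [uIcc_of_le hx.le] at ht
    simp only [hg (x - t) (sub_nonneg.mpr ht.2)]
  have hone := laplaceConvergent_const (1 : ℂ) hz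
  have hconst := laplaceConvergent_const (g 0) hz
  have hmain := laplaceTransform_congr hconv z
  rw [laplaceTransform_convolution hone hLkg', laplaceTransform_convolution hLk (hLg.sub hconst),
    laplaceTransform_sub hLg hconst, laplaceTransform_const _ hz, laplaceTransform_const _ hz,
    smul_eq_mul, mul_one, inv_smul_eq_iff₀ hz0, smul_comm, smul_sub, smul_inv_smul₀ hz0] at hmain
  exact hmain

end ConvolutionPrimitive

section LogSubstitution

theorem hasDerivAt_const_mul_exp (a x : ℝ) :
    HasDerivAt (fun y => a * Real.exp y) (a * Real.exp x) x :=
  (Real.hasDerivAt_exp x).const_mul a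

theorem monotone_const_mul_exp {a : ℝ} (ha : 0 ≤ a) : Monotone fun x => a * Real.exp x :=
  Real.exp_monotone.const_mul ha

theorem image_const_mul_exp_Ioi {a : ℝ} (ha : 0 < a) :
    (fun x => a * Real.exp x) '' Ioi 0 = Ioi a := by
  ext t
  constructor
  · rintro ⟨x, hx, rfl⟩
    exact lt_mul_of_one_lt_right ha (Real.one_lt_exp_iff.mpr hx)
  · intro (ht : a < t)
    refine ⟨Real.log (t / a), Real.log_pos ((one_lt_div ha).mpr ht), ?_⟩
    simp only [Real.exp_log (div_pos (ha.trans ht) ha), mul_div_cancel₀ t ha.ne']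

theorem integral_const_mul_exp_smul_comp {E : Type*} [NormedAddCommGroup E] [NormedSpace ℝ E]
    {a : ℝ} (ha : 0 ≤ a) (h : ℝ → E) (x : ℝ) :
    ∫ t in 0..x, (a * Real.exp t) • h (a * Real.exp t) = ∫ s in a..(a * Real.exp x), h s := by
  have hsubst := intervalIntegral.integral_deriv_smul_comp_of_deriv_nonneg (a := 0) (b := x)
    (g := h) (by fun_prop) (fun t _ => hasDerivAt_const_mul_exp a t) fun t _ => by positivity
  simpa only [Function.comp_apply, Real.exp_zero, mul_one] using hsubst

theorem intervalIntegrable_const_mul_exp_smul_comp_iff {E : Type*} [NormedAddCommGroup E]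
    [NormedSpace ℝ E] {a : ℝ} (ha : 0 ≤ a) (h : ℝ → E) (x : ℝ) :
    IntervalIntegrable (fun t => (a * Real.exp t) • h (a * Real.exp t)) volume 0 x ↔
      IntervalIntegrable h volume a (a * Real.exp x) := by
  have hsubst := intervalIntegral.integrable_deriv_smul_comp_iff_of_deriv_nonneg (a := 0) (b := x)
    (g := h) (by fun_prop) (fun t _ => hasDerivAt_const_mul_exp a t) fun t _ => by positivity
  simpa only [Function.comp_apply, Real.exp_zero, mul_one] using! hsubst

end LogSubstitution

section ModifiedLaplace

variable {E : Type*} [NormedAddCommGroup E] [NormedSpace ℂ E] {a : ℝ}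

/-- The modified Laplace transform `∫ₐ^∞ e^{-z log(t/a)} f(t) dt/t`. -/
noncomputable def modifiedLaplace (a : ℝ) (f : ℝ → E) (z : ℂ) : E :=
  ∫ t in Ioi a, (Complex.exp (-z * Real.log (t / a)) / t) • f t

/-- Absolute convergence of the integral defining `modifiedLaplace a f z`. -/
def ModifiedLaplaceConvergent (a : ℝ) (f : ℝ → E) (z : ℂ) : Prop :=
  IntegrableOn (fun t : ℝ => (Complex.exp (-z * Real.log (t / a)) / t) • f t) (Ioi a)

theorem modifiedLaplace_complex (f : ℝ → ℂ) (z : ℂ) :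
    modifiedLaplace a f z = ∫ t in Ioi a, Complex.exp (-z * Real.log (t / a)) * f t / t := by
  simp only [modifiedLaplace, smul_eq_mul, div_mul_eq_mul_div]

theorem modifiedLaplaceConvergent_complex_iff (f : ℝ → ℂ) (z : ℂ) :
    ModifiedLaplaceConvergent a f z ↔
      IntegrableOn (fun t : ℝ => Complex.exp (-z * Real.log (t / a)) * f t / t) (Ioi a) := by
  simp only [ModifiedLaplaceConvergent, smul_eq_mul, div_mul_eq_mul_div]

theorem smul_modifiedLaplace_integrand_comp_exp (ha : 0 < a) (z : ℂ) (x : ℝ) (v : E) :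
    (a * Real.exp x) •
      (Complex.exp (-z * Real.log (a * Real.exp x / a)) / (a * Real.exp x : ℝ)) • v =
        Complex.exp (-z * x) • v := by
  have hpos : ((a * Real.exp x : ℝ) : ℂ) ≠ 0 := by
    exact_mod_cast (mul_pos ha (Real.exp_pos x)).ne'
  rw [mul_div_cancel_left₀ _ ha.ne', Real.log_exp, ← Complex.coe_smul, smul_smul,
    mul_div_cancel₀ _ hpos]

theorem modifiedLaplace_eq_laplaceTransform (ha : 0 < a) (f : ℝ → E) (z : ℂ) :
    modifiedLaplace a f z = laplaceTransform (fun x => f (a * Real.exp x)) z := by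
  rw [modifiedLaplace, ← image_const_mul_exp_Ioi ha,
    integral_image_eq_integral_deriv_smul_of_monotoneOn measurableSet_Ioi
      (fun x _ => (hasDerivAt_const_mul_exp a x).hasDerivWithinAt)
      ((monotone_const_mul_exp ha.le).monotoneOn _)]
  simp only [smul_modifiedLaplace_integrand_comp_exp ha, laplaceTransform]

theorem modifiedLaplaceConvergent_iff (ha : 0 < a) (f : ℝ → E) (z : ℂ) :
    ModifiedLaplaceConvergent a f z ↔ LaplaceConvergent (fun x => f (a * Real.exp x)) z := by
  rw [ModifiedLaplaceConvergent, ← image_const_mul_exp_Ioi ha,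
    integrableOn_image_iff_integrableOn_deriv_smul_of_monotoneOn measurableSet_Ioi
      (fun x _ => (hasDerivAt_const_mul_exp a x).hasDerivWithinAt)
      ((monotone_const_mul_exp ha.le).monotoneOn _)]
  simp only [smul_modifiedLaplace_integrand_comp_exp ha, LaplaceConvergent]

end ModifiedLaplace

section CaputoHadamard

/-- The Caputo–Hadamard derivative of order `α` with base point `a`, as an operator on the
derivative `f'` of the differentiated function `f`. -/
noncomputable def caputoHadamardDeriv {E : Type*} [NormedAddCommGroup E] [NormedSpace ℝ E]
    (a α : ℝ) (f' : ℝ → E) (t : ℝ) : E :=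
  (1 / Real.Gamma (1 - α)) • ∫ s in a..t, (Real.log (t / s) ^ (-α) / s) • (s • f' s)

theorem caputoHadamardDeriv_ofReal (a α : ℝ) (f' : ℝ → ℝ) (t : ℝ) :
    caputoHadamardDeriv a α (fun s => (f' s : ℂ)) t =
      ((1 / Real.Gamma (1 - α) *
        ∫ s in a..t, Real.log (t / s) ^ (-α) * (s * f' s) / s : ℝ) : ℂ) := by
  simp only [caputoHadamardDeriv, Complex.real_smul, ← Complex.ofReal_mul,
    intervalIntegral.integral_ofReal, div_mul_eq_mul_div (_ ^ _)]

variable {E : Type*} [NormedAddCommGroup E] [NormedSpace ℂ E] {a α : ℝ}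

theorem caputoHadamardDeriv_const_mul_exp (ha : 0 < a) (f' : ℝ → E) (x : ℝ) :
    caputoHadamardDeriv a α f' (a * Real.exp x) =
      ∫ t in 0..x, riemannLiouvilleKernel (1 - α) t •
        ((a * Real.exp (x - t)) • f' (a * Real.exp (x - t))) := by
  have hlog (t : ℝ) : Real.log (a * Real.exp x / (a * Real.exp t)) = x - t := by
    rw [mul_div_mul_left _ _ ha.ne', ← Real.exp_sub, Real.log_exp]
  have hkernel (t : ℝ) (v : E) : (1 / Real.Gamma (1 - α)) • (a * Real.exp t) •
      ((x - t) ^ (-α) / (a * Real.exp t)) • v = riemannLiouvilleKernel (1 - α) (x - t) • v := by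
    rw [riemannLiouvilleKernel, Complex.coe_smul, smul_smul, smul_smul, sub_sub_cancel_left]
    congr 1
    field_simp
  have hreflect := intervalIntegral.integral_comp_sub_left (a := 0) (b := x) (fun t =>
    riemannLiouvilleKernel (1 - α) (x - t) • ((a * Real.exp t) • f' (a * Real.exp t))) x
  simp only [sub_sub_cancel, sub_self, sub_zero] at hreflect
  rw [hreflect, caputoHadamardDeriv, ← integral_const_mul_exp_smul_comp ha.le,
    ← intervalIntegral.integral_smul]
  simp only [hlog, hkernel]

theorem modifiedLaplace_caputoHadamard_general [CompleteSpace E] (ha : 0 < a) (hα : α < 1)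
    {f f' : ℝ → E} (hf : ContinuousOn f (Ici a)) (hderiv : ∀ t ∈ Ioi a, HasDerivAt f (f' t) t)
    (hf' : ∀ b ≥ a, IntervalIntegrable f' volume a b) {z : ℂ} (hz : 0 < z.re)
    (hLD : ModifiedLaplaceConvergent a (caputoHadamardDeriv a α f') z)
    (hLf : ModifiedLaplaceConvergent a f z) :
    modifiedLaplace a (caputoHadamardDeriv a α f') z =
      z ^ (α : ℂ) • modifiedLaplace a f z - z ^ ((α : ℂ) - 1) • f a := by
  have hz0 : z ≠ 0 := fun h => by simp [h] at hz
  have hβ : 0 < 1 - α := sub_pos.mpr hα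
  rw [modifiedLaplaceConvergent_iff ha] at hLD hLf
  simp only [caputoHadamardDeriv_const_mul_exp ha] at hLD
  have hexp {x : ℝ} (hx : 0 ≤ x) : a ≤ a * Real.exp x :=
    le_mul_of_one_le_right ha.le (Real.one_le_exp hx)
  have hint (x : ℝ) (hx : 0 ≤ x) :
      IntervalIntegrable (fun t => (a * Real.exp t) • f' (a * Real.exp t)) volume 0 x :=
    (intervalIntegrable_const_mul_exp_smul_comp_iff ha.le f' x).mpr (hf' _ (hexp hx))
  have hprim (x : ℝ) (hx : 0 ≤ x) : ∫ t in 0..x, (a * Real.exp t) • f' (a * Real.exp t) =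
      f (a * Real.exp x) - f (a * Real.exp 0) := by
    rw [integral_const_mul_exp_smul_comp ha.le, Real.exp_zero, mul_one]
    exact intervalIntegral.integral_eq_sub_of_hasDerivAt_of_le (hexp hx)
      (hf.mono Icc_subset_Ici_self) (fun t ht => hderiv t ht.1) (hf' _ (hexp hx))
  have hmain := laplaceTransform_convolution_deriv hz hint hprim
    (laplaceConvergent_riemannLiouvilleKernel hβ hz) hLf hLD
  simp only [modifiedLaplace_eq_laplaceTransform ha, caputoHadamardDeriv_const_mul_exp ha]
  have horder : (-((1 - α : ℝ) : ℂ)) = (α : ℂ) - 1 := by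
    push_cast
    ring
  have hpow : z ^ ((α : ℂ) - 1) * z = z ^ (α : ℂ) := by
    rw [Complex.cpow_sub _ _ hz0, Complex.cpow_one, div_mul_cancel₀ _ hz0]
  rw [hmain, laplaceTransform_riemannLiouvilleKernel hβ hz, smul_sub, smul_smul, horder, hpow,
    Real.exp_zero, mul_one]

end CaputoHadamard

/-- Modified Laplace transform of the Caputo–Hadamard derivative: for
`0 < α < 1` and `f` sufficiently smooth with suitable decay (encoded via
differentiability and integrability hypotheses),
`L{_{CH}D_a^α f}(z) = z^α L{f}(z) − z^{α−1} f(a)`. -/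
theorem modifiedLaplace_caputoHadamard
    (a α : ℝ) (ha : 0 < a) (hα0 : 0 < α) (hα1 : α < 1)
    (f f' : ℝ → ℝ)
    (hderiv : ∀ t, a ≤ t → HasDerivAt f (f' t) t) (hf' : Continuous f')
    (z : ℂ) (hz : 0 < z.re)
    (hint1 : Integrable (fun t =>
        Complex.exp (-z * (Real.log (t / a) : ℂ)) *
          (((1 / Real.Gamma (1 - α)) *
            ∫ s in a..t, Real.log (t / s) ^ (-α) * (s * f' s) / s : ℝ) : ℂ) / (t : ℂ))
      (volume.restrict (Set.Ioi a)))
    (hint2 : Integrable (fun t =>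
        Complex.exp (-z * (Real.log (t / a) : ℂ)) * (f t : ℂ) / (t : ℂ))
      (volume.restrict (Set.Ioi a))) :
    ∫ t in Set.Ioi a,
        Complex.exp (-z * (Real.log (t / a) : ℂ)) *
          (((1 / Real.Gamma (1 - α)) *
            ∫ s in a..t, Real.log (t / s) ^ (-α) * (s * f' s) / s : ℝ) : ℂ) / (t : ℂ) =
      z ^ (α : ℂ) *
          (∫ t in Set.Ioi a,
            Complex.exp (-z * (Real.log (t / a) : ℂ)) * (f t : ℂ) / (t : ℂ))
        - z ^ ((α : ℂ) - 1) * (f a : ℂ) := by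
  simpa only [modifiedLaplace_complex, caputoHadamardDeriv_ofReal, smul_eq_mul] using
    modifiedLaplace_caputoHadamard_general (f := fun t => (f t : ℂ)) (f' := fun t => (f' t : ℂ))
      ha hα1 (fun t ht => (hderiv t ht).ofReal_comp.continuousAt.continuousWithinAt)
      (fun t ht => (hderiv t (le_of_lt ht)).ofReal_comp)
      (fun b _ => (Complex.continuous_ofReal.comp hf').intervalIntegrable a b) hz
      (by simpa only [modifiedLaplaceConvergent_complex_iff, caputoHadamardDeriv_ofReal,
        IntegrableOn] using hint1)
      ((modifiedLaplaceConvergent_complex_iff _ z).mpr hint2)
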